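/- (Karlsson–Minton summation.) Let a, b, c_1,...,c_r be complex numbers and m_1,...,m_r nonnegative integers with Re(a + m_1 + ... + m_r) < 1 and b, c_1,...,c_r, b-a not nonpositive integers. Then the hypergeometric series ∑_{k=0}^∞ (a)_k (b)_k ∏_{i=1}^r (c_i+m_i)_k / (k! (b+1)_k ∏_{i=1}^r (c_i)_k) equals Γ(b+1)Γ(1-a)/Γ(1+b-a) · ∏_{i=1}^r (c_i - b)_{m_i}/(c_i)_{m_i}, where (x)_k = x(x+1)⋯(x+k-1) is the Pochhammer symbol. -/

import Mathlib

open Finset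

/-- Pochhammer symbol (rising factorial) `(x)_k`. -/
noncomputable def poch (x : ℂ) (k : ℕ) : ℂ := ∏ j ∈ Finset.range k, (x + j)

open Filter Topology Asymptotics MeasureTheory

lemma poch_succ (x : ℂ) (k : ℕ) : poch x (k + 1) = poch x k * (x + k) := by
  simp [poch, prod_range_succ]

lemma poch_succ_left (x : ℂ) (k : ℕ) : poch x (k + 1) = x * poch (x + 1) k := by
  simp only [poch, prod_range_succ']
  rw [mul_comm]
  congr 1
  · simp
  · exact prod_congr rfl fun j _ => by push_cast; ring

lemma poch_add (x : ℂ) (m k : ℕ) : poch x (m + k) = poch x m * poch (x + m) k := by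
  simp only [poch, prod_range_add]
  congr 1
  exact prod_congr rfl fun j _ => by push_cast; ring

lemma poch_ne_zero {x : ℂ} (hx : ∀ k : ℕ, x + k ≠ 0) (k : ℕ) : poch x k ≠ 0 :=
  prod_ne_zero_iff.mpr fun j _ => hx j

lemma poch_eq_ascPochhammer_eval (x : ℂ) (k : ℕ) : poch x k = (ascPochhammer ℂ k).eval x := by
  induction k with
  | zero => simp [poch]
  | succ k ih => rw [poch_succ, ascPochhammer_succ_eval, ih]

/-- The `k`-th Taylor coefficient `(a)_k / k!` of `(1 - t) ^ (-a)`. -/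
noncomputable def risingCoeff (a : ℂ) (k : ℕ) : ℂ := poch a k / k.factorial

lemma risingCoeff_succ (a : ℂ) (k : ℕ) :
    (k + 1) * risingCoeff a (k + 1) = (a + k) * risingCoeff a k := by
  have h : (k.factorial : ℂ) ≠ 0 := by exact_mod_cast k.factorial_ne_zero
  have h' : (k + 1 : ℂ) ≠ 0 := by exact_mod_cast k.succ_ne_zero
  simp only [risingCoeff, poch_succ, Nat.factorial_succ]
  push_cast
  field_simp

lemma add_mul_risingCoeff (a : ℂ) (k : ℕ) :
    (k + a) * risingCoeff a k = a * risingCoeff (a + 1) k := by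
  have h := poch_succ a k
  rw [poch_succ_left] at h
  simp only [risingCoeff]
  linear_combination -h / (k.factorial : ℂ)

lemma sum_range_risingCoeff (a : ℂ) (n : ℕ) :
    ∑ k ∈ range (n + 1), risingCoeff a k = risingCoeff (a + 1) n := by
  induction n with
  | zero => simp [risingCoeff, poch]
  | succ n ih =>
    rw [sum_range_succ, ih]
    have h' : (n + 1 : ℂ) ≠ 0 := by exact_mod_cast n.succ_ne_zero
    apply mul_left_cancel₀ h'
    rw [mul_add, risingCoeff_succ, risingCoeff_succ]
    linear_combination add_mul_risingCoeff a n

lemma risingCoeff_eq_choose (a : ℂ) (k : ℕ) :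
    risingCoeff a k = Ring.choose (a + k - 1) k := by
  have h : (k.factorial : ℂ) ≠ 0 := by exact_mod_cast k.factorial_ne_zero
  rw [← Ring.multichoose_eq, risingCoeff, div_eq_iff h, poch_eq_ascPochhammer_eval,
    ← Polynomial.ascPochhammer_smeval_eq_eval, ← Ring.factorial_nsmul_multichoose_eq_ascPochhammer,
    nsmul_eq_mul, mul_comm]

lemma natCast_isBigO_add (b : ℂ) :
    (fun n : ℕ => (n : ℝ)) =O[atTop] fun n : ℕ => (n : ℂ) + b := by
  have ho : (fun _ : ℕ => b) =o[atTop] (fun n : ℕ => (n : ℂ)) := by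
    rw [isLittleO_const_left]
    right
    simpa [Function.comp_def] using tendsto_natCast_atTop_atTop (R := ℝ)
  have h : (fun n : ℕ => (n : ℝ)) =O[atTop] fun n : ℕ => (n : ℂ) := .of_bound 1 (by simp)
  exact h.trans ho.right_isBigO_add'

lemma inv_natCast_add_isBigO (b : ℂ) :
    (fun n : ℕ => ((n : ℂ) + b)⁻¹) =O[atTop] fun n : ℕ => (n : ℝ)⁻¹ := by
  refine (natCast_isBigO_add b).inv_rev ?_
  filter_upwards [eventually_gt_atTop 0] with n hn h0
  simp_all

lemma risingCoeff_isBigO (a : ℂ) :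
    risingCoeff a =O[atTop] fun n : ℕ => (n : ℝ) ^ (a.re - 1) := by
  by_cases ha : ∃ m : ℕ, a = -m
  · obtain ⟨m, rfl⟩ := ha
    refine (isBigO_zero (E' := ℂ) _ _).congr' (f₁ := fun _ => 0) ?_ EventuallyEq.rfl
    filter_upwards [eventually_gt_atTop m] with n hn
    have : poch (-(m : ℂ)) n = 0 := prod_eq_zero (mem_range.mpr hn) (by simp)
    simp [risingCoeff, this]
  · have ha' : ∀ m : ℕ, a + m ≠ 0 := fun m h => ha ⟨m, eq_neg_of_add_eq_zero_left h⟩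
    have hΓ : Complex.Gamma a ≠ 0 := Complex.Gamma_ne_zero fun m h => ha ⟨m, h⟩
    have h1 : (fun n : ℕ => (n : ℂ) ^ a) =O[atTop] fun n : ℕ => (n : ℝ) ^ a.re := by
      refine IsBigO.of_bound 1 ?_
      filter_upwards [eventually_gt_atTop 0] with n hn
      rw [Complex.norm_natCast_cpow_of_pos hn, one_mul]
      exact le_abs_self _
    have h2 : (fun n : ℕ => (Complex.GammaSeq a n)⁻¹) =O[atTop] fun _ : ℕ => (1 : ℝ) :=
      ((Complex.GammaSeq_tendsto_Gamma a).inv₀ hΓ).isBigO_one ℝ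
    have h3 := inv_natCast_add_isBigO a
    refine ((h1.mul h2).mul h3).congr' ?_ ?_
    · filter_upwards [eventually_gt_atTop 0] with n hn
      have hn' : (n : ℂ) ^ a ≠ 0 := by
        simp [Complex.cpow_eq_zero_iff, hn.ne']
      have hf : (n.factorial : ℂ) ≠ 0 := by exact_mod_cast n.factorial_ne_zero
      have hG : Complex.GammaSeq a n = (n : ℂ) ^ a * n.factorial / (poch a n * (a + n)) := by
        rw [← poch_succ]; rfl
      have := poch_ne_zero ha' n
      have := ha' n
      rw [hG, risingCoeff, add_comm (n : ℂ)]
      field_simp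
    · filter_upwards [eventually_gt_atTop 0] with n hn
      have hn' : (0 : ℝ) < n := by exact_mod_cast hn
      rw [Real.rpow_sub_one hn'.ne', mul_one, div_eq_mul_inv]

lemma tendsto_risingCoeff {a : ℂ} (ha : a.re < 1) :
    Tendsto (risingCoeff a) atTop (𝓝 0) := by
  refine (risingCoeff_isBigO a).trans_tendsto ?_
  have := (tendsto_rpow_neg_atTop (y := 1 - a.re) (by linarith)).comp
    (tendsto_natCast_atTop_atTop (R := ℝ))
  simpa [Function.comp_def] using this

lemma hasSum_risingCoeff {a : ℂ} (ha : a.re < 0) : HasSum (risingCoeff a) 0 := by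
  have hs : Summable (risingCoeff a) :=
    summable_of_isBigO_nat (Real.summable_nat_rpow.mpr (by linarith)) (risingCoeff_isBigO a)
  rw [hs.hasSum_iff_tendsto_nat, ← tendsto_add_atTop_iff_nat 1]
  simp only [sum_range_risingCoeff]
  exact tendsto_risingCoeff (by simpa using ha)

lemma Polynomial.eq_C_add_mul_div_X_add_C (p : Polynomial ℂ) (x : ℂ) :
    p = C (p.eval (-x)) + (X + C x) * (p /ₘ (X - C (-x))) := by
  conv_lhs => rw [← modByMonic_add_div p (X - C (-x)), modByMonic_X_sub_C_eq_C_eval]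
  simp

lemma Polynomial.degree_div_X_add_C_lt {p : Polynomial ℂ} {d : ℕ} (hp : p.degree < (d + 1 : ℕ))
    (x : ℂ) : (p /ₘ (X - C x)).degree < d := by
  by_cases h0 : p.natDegree = 0
  · rw [(divByMonic_eq_zero_iff (monic_X_sub_C x)).mpr]
    · simp
    · rw [degree_X_sub_C]
      exact lt_of_le_of_lt degree_le_natDegree (by simp [h0])
  · have := (natDegree_lt_iff_degree_lt (fun h => h0 (by simp [h]))).mpr hp
    refine lt_of_le_of_lt degree_le_natDegree ?_
    rw [natDegree_divByMonic _ (monic_X_sub_C x), natDegree_X_sub_C]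
    exact_mod_cast (by omega)

lemma hasSum_risingCoeff_mul_eval (d : ℕ) {a : ℂ} (Q : Polynomial ℂ) (hQ : Q.degree < d)
    (ha : a.re + d < 1) : HasSum (fun k : ℕ => risingCoeff a k * Q.eval (k : ℂ)) 0 := by
  induction d generalizing a Q with
  | zero =>
    have : Q = 0 := by simpa using hQ
    simp [this]
  | succ d ih =>
    push_cast at ha
    have hd : (0 : ℝ) ≤ d := d.cast_nonneg
    have h1 := (hasSum_risingCoeff (a := a) (by linarith)).mul_right (Q.eval (-a))
    have h2 := (ih (a := a + 1) _ (Polynomial.degree_div_X_add_C_lt hQ (-a))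
      (by simp; linarith)).mul_left a
    convert! h1.add h2 using 1
    · ext k
      conv_lhs => rw [Polynomial.eq_C_add_mul_div_X_add_C Q a]
      simp only [Polynomial.eval_add, Polynomial.eval_mul, Polynomial.eval_C, Polynomial.eval_X]
      linear_combination
        (Q /ₘ (Polynomial.X - Polynomial.C (-a))).eval (k : ℂ) * add_mul_risingCoeff a k
    · simp

lemma summable_risingCoeff_div {a : ℂ} (b : ℂ) (ha : a.re < 1) :
    Summable fun k : ℕ => risingCoeff a k / (k + b) := by
  refine summable_of_isBigO_nat (Real.summable_nat_rpow.mpr (show a.re - 2 < -1 by linarith)) ?_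
  refine ((risingCoeff_isBigO a).mul (inv_natCast_add_isBigO b)).congr' ?_ ?_
  · exact .of_forall fun n => (div_eq_mul_inv _ _).symm
  · filter_upwards [eventually_gt_atTop 0] with n hn
    have hn' : (0 : ℝ) < n := by exact_mod_cast hn
    rw [← div_eq_mul_inv, ← Real.rpow_sub_one hn'.ne']
    ring_nf

lemma hasSum_risingCoeff_div_of_re_pos {a b : ℂ} (ha : a.re < 1) (hb : 0 < b.re) :
    HasSum (fun k : ℕ => risingCoeff a k / (k + b))
      (Complex.Gamma b * Complex.Gamma (1 - a) / Complex.Gamma (1 + b - a)) := by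
  have hβ := Complex.betaIntegral_eq_Gamma_mul_div b (1 - a) hb (by simpa using ha)
  rw [show b + (1 - a) = 1 + b - a by ring] at hβ
  rw [← hβ, Complex.betaIntegral, intervalIntegral.integral_of_le zero_le_one,
    integral_Ioc_eq_integral_Ioo]
  let F : ℕ → ℝ → ℂ := fun k x => risingCoeff a k * (x : ℂ) ^ (k + b - 1)
  have hre (k : ℕ) : 0 < (k + b).re := by
    have : (0 : ℝ) ≤ k := k.cast_nonneg
    simp; linarith
  have hint (k : ℕ) : IntegrableOn (F k) (Set.Ioo 0 1) := by
    have h := intervalIntegral.intervalIntegrable_cpow' (a := 0) (b := 1) (r := k + b - 1)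
      (by have := hre k; simp at this ⊢; linarith)
    rw [intervalIntegrable_iff_integrableOn_Ioo_of_le zero_le_one] at h
    exact h.const_mul _
  have hval (k : ℕ) : ∫ x in Set.Ioo (0 : ℝ) 1, F k x = risingCoeff a k / (k + b) := by
    have hk : (k + b : ℂ) ≠ 0 := fun h => (hre k).ne' (by simp [h])
    rw [← integral_Ioc_eq_integral_Ioo, ← intervalIntegral.integral_of_le zero_le_one,
      intervalIntegral.integral_const_mul, integral_cpow
        (Or.inl (by have := hre k; simp at this ⊢; linarith))]
    simp [hk, Complex.zero_cpow, div_eq_mul_inv]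
  have hnorm (k : ℕ) : ∫ x in Set.Ioo (0 : ℝ) 1, ‖F k x‖ = ‖risingCoeff a k‖ / (k + b.re) := by
    have hk := hre k
    have hk' : 0 < k + b.re := by simpa using hk
    have : ∫ x in Set.Ioo (0 : ℝ) 1, ‖F k x‖ =
        ∫ x in Set.Ioo (0 : ℝ) 1, ‖risingCoeff a k‖ * x ^ (k + b.re - 1) := by
      refine setIntegral_congr_fun measurableSet_Ioo fun x hx => ?_
      simp [F, Complex.norm_cpow_eq_rpow_re_of_pos hx.1]
    rw [this, ← integral_Ioc_eq_integral_Ioo, ← intervalIntegral.integral_of_le zero_le_one,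
      intervalIntegral.integral_const_mul, integral_rpow (Or.inl (by linarith))]
    simp [hk'.ne', div_eq_mul_inv]
  have hsum : Summable fun k : ℕ => ∫ x in Set.Ioo (0 : ℝ) 1, ‖F k x‖ := by
    simp only [hnorm]
    have := (summable_risingCoeff_div (b.re : ℂ) ha).norm
    refine this.congr fun k => ?_
    have hk' : 0 < k + b.re := by simpa using hre k
    rw [norm_div]
    congr 1
    rw [← Complex.ofReal_natCast, ← Complex.ofReal_add, Complex.norm_real, Real.norm_eq_abs,
      abs_of_pos hk']
  have key := hasSum_integral_of_summable_integral_norm hint hsum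
  simp only [hval] at key
  convert! key using 1
  refine setIntegral_congr_fun measurableSet_Ioo fun x hx => ?_
  have hx0 : (x : ℂ) ≠ 0 := by exact_mod_cast hx.1.ne'
  have hbin := (Complex.one_div_one_sub_cpow_hasFPowerSeriesOnBall_zero a).hasSum (y := (x : ℂ))
    (by simp [enorm_eq_nnnorm, ← NNReal.coe_lt_coe, abs_of_pos hx.1, hx.2])
  simp only [FormalMultilinearSeries.ofScalars_apply_eq, zero_add] at hbin
  have := (hbin.mul_left ((x : ℂ) ^ (b - 1))).tsum_eq
  simp only [F]
  rw [show 1 - a - 1 = -a by ring, Complex.cpow_neg, ← one_div, ← this]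
  refine tsum_congr fun k => ?_
  rw [← risingCoeff_eq_choose, show (k + b - 1 : ℂ) = (b - 1) + k by ring,
    Complex.cpow_add _ _ hx0, Complex.cpow_natCast, smul_eq_mul]
  ring

lemma tsum_risingCoeff_div_recurrence {a b : ℂ} (ha : a.re < 1) (hb : ∀ k : ℕ, b + k ≠ 0) :
    b * ∑' k : ℕ, risingCoeff a k / (k + b) =
      (1 + b - a) * ∑' k : ℕ, risingCoeff a k / (k + (b + 1)) := by
  have h1 := (summable_risingCoeff_div b ha).hasSum.mul_left b
  have h2 := (summable_risingCoeff_div (b + 1) ha).hasSum.mul_left (1 + b - a)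
  have h := (h1.sub h2)
  have hpart (n : ℕ) : ∑ k ∈ range n, (b * (risingCoeff a k / (k + b)) -
      (1 + b - a) * (risingCoeff a k / (k + (b + 1)))) = risingCoeff a n * (n * (n + b)⁻¹) := by
    induction n with
    | zero => simp
    | succ n ih =>
      rw [sum_range_succ, ih]
      have e1 : (n + b : ℂ) ≠ 0 := by simpa [add_comm] using hb n
      have e2 : (n + (b + 1) : ℂ) ≠ 0 := by
        have := hb (n + 1); push_cast at this; convert this using 1; ring
      have e3 : (n + 1 + b : ℂ) ≠ 0 := by convert e2 using 1; ring
      have := risingCoeff_succ a n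
      push_cast
      rw [show risingCoeff a (n + 1) * ((n + 1) * (n + 1 + b : ℂ)⁻¹) =
        ((n + 1) * risingCoeff a (n + 1)) * (n + (b + 1) : ℂ)⁻¹ by
          rw [show (n + 1 + b : ℂ) = n + (b + 1) by ring]; ring, this]
      field_simp
      ring
  have hlim := h.tendsto_sum_nat
  simp only [hpart] at hlim
  have hzero : Tendsto (fun n : ℕ => risingCoeff a n * (n * (n + b : ℂ)⁻¹)) atTop (𝓝 0) := by
    have hO : (fun n : ℕ => (n : ℂ) * (n + b : ℂ)⁻¹) =O[atTop] fun _ : ℕ => (1 : ℝ) := by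
      refine ((IsBigO.of_bound 1 (by simp) :
        (fun n : ℕ => (n : ℂ)) =O[atTop] fun n : ℕ => (n : ℝ)).mul
          (inv_natCast_add_isBigO b)).congr' EventuallyEq.rfl ?_
      filter_upwards [eventually_gt_atTop 0] with n hn
      exact mul_inv_cancel₀ (by exact_mod_cast hn.ne')
    refine ((isBigO_refl (fun n => ‖risingCoeff a n‖) atTop).of_norm_left.mul hO).trans_tendsto ?_
    simpa using (tendsto_risingCoeff ha).norm
  exact sub_eq_zero.mp (tendsto_nhds_unique hlim hzero)

lemma tsum_risingCoeff_div {a b : ℂ} (ha : a.re < 1) (hb : ∀ k : ℕ, b + k ≠ 0)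
    (hba : ∀ k : ℕ, b - a + k ≠ 0) :
    ∑' k : ℕ, risingCoeff a k / (k + b) =
      Complex.Gamma b * Complex.Gamma (1 - a) / Complex.Gamma (1 + b - a) := by
  obtain ⟨n, hn⟩ := exists_nat_gt (-b.re)
  induction n generalizing b with
  | zero => exact (hasSum_risingCoeff_div_of_re_pos ha (by simpa using hn)).tsum_eq
  | succ n ih =>
    push_cast at hn
    have hb0 : b ≠ 0 := by simpa using hb 0
    have hba1 : 1 + b - a ≠ 0 := by
      have := hba 1; push_cast at this; convert this using 1; ring
    have := ih (b := b + 1)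
      (fun k => by have := hb (k + 1); push_cast at this; convert this using 1; ring)
      (fun k => by have := hba (k + 1); push_cast at this; convert this using 1; ring)
      (by simp; linarith)
    apply mul_left_cancel₀ hb0
    rw [tsum_risingCoeff_div_recurrence ha hb, this, Complex.Gamma_add_one b hb0,
      show 1 + (b + 1) - a = (1 + b - a) + 1 by ring, Complex.Gamma_add_one _ hba1]
    field_simp

lemma natDegree_prod_X_add_C_le (r : ℕ) (c : Fin r → ℂ) (m : Fin r → ℕ) :
    (∏ i, ∏ j ∈ range (m i), (Polynomial.X + Polynomial.C (c i + j))).natDegree ≤ ∑ i, m i := by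
  refine (Polynomial.natDegree_prod_le _ _).trans (sum_le_sum fun i _ => ?_)
  refine (Polynomial.natDegree_prod_le _ _).trans ?_
  simp [-map_add]

lemma eval_prod_X_add_C (r : ℕ) (c : Fin r → ℂ) (m : Fin r → ℕ) (x : ℂ) :
    (∏ i, ∏ j ∈ range (m i), (Polynomial.X + Polynomial.C (c i + j))).eval x =
      ∏ i, poch (c i + x) (m i) := by
  simp only [Polynomial.eval_prod, poch, Polynomial.eval_add, Polynomial.eval_X, Polynomial.eval_C]
  exact prod_congr rfl fun i _ => prod_congr rfl fun j _ => by ring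

theorem stmt10 (r : ℕ) (a b : ℂ) (c : Fin r → ℂ) (m : Fin r → ℕ)
    (hconv : (a + (∑ i, m i : ℕ)).re < 1)
    (hb : ∀ k : ℕ, b + k ≠ 0)
    (hc : ∀ i, ∀ k : ℕ, c i + k ≠ 0)
    (hba : ∀ k : ℕ, b - a + k ≠ 0) :
    (∑' k : ℕ, poch a k * poch b k * (∏ i, poch (c i + m i) k) /
        ((k.factorial : ℂ) * poch (b + 1) k * ∏ i, poch (c i) k)) =
      Complex.Gamma (b + 1) * Complex.Gamma (1 - a) / Complex.Gamma (1 + b - a) *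
        ∏ i, poch (c i - b) (m i) / poch (c i) (m i) := by
  have hconv' : a.re + (∑ i, m i : ℕ) < 1 := by simpa using hconv
  have ha : a.re < 1 := by
    have : (0 : ℝ) ≤ (∑ i, m i : ℕ) := Nat.cast_nonneg _
    linarith
  have hb0 : b ≠ 0 := by simpa using hb 0
  set P : Polynomial ℂ := ∏ i, ∏ j ∈ range (m i), (Polynomial.X + Polynomial.C (c i + j)) with hP
  set Q := P /ₘ (Polynomial.X - Polynomial.C (-b))
  have hPdeg : P.degree < (∑ i, m i + 1 : ℕ) :=
    lt_of_le_of_lt Polynomial.degree_le_natDegree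
      (by exact_mod_cast Nat.lt_succ_of_le (natDegree_prod_X_add_C_le r c m))
  have hQ := hasSum_risingCoeff_mul_eval _ Q (Polynomial.degree_div_X_add_C_lt hPdeg _) hconv'
  have hS := (summable_risingCoeff_div b ha).hasSum
  rw [tsum_risingCoeff_div ha hb hba] at hS
  have hterm (k : ℕ) : poch a k * poch b k * (∏ i, poch (c i + m i) k) /
        ((k.factorial : ℂ) * poch (b + 1) k * ∏ i, poch (c i) k) =
      b / (∏ i, poch (c i) (m i)) *
        (P.eval (-b) * (risingCoeff a k / (k + b)) + risingCoeff a k * Q.eval (k : ℂ)) := by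
    have hkb : (k + b : ℂ) ≠ 0 := by simpa [add_comm] using hb k
    have hb1 : poch (b + 1) k ≠ 0 := poch_ne_zero
      (fun j => by have := hb (j + 1); push_cast at this; convert this using 1; ring) k
    have hf : (k.factorial : ℂ) ≠ 0 := by exact_mod_cast k.factorial_ne_zero
    have hck : ∏ i, poch (c i) k ≠ 0 := prod_ne_zero_iff.mpr fun i _ => poch_ne_zero (hc i) k
    have hcm : ∏ i, poch (c i) (m i) ≠ 0 :=
      prod_ne_zero_iff.mpr fun i _ => poch_ne_zero (hc i) (m i)
    have hbk : poch b k * (b + k) = b * poch (b + 1) k := by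
      rw [← poch_succ, poch_succ_left]
    have hcc : (∏ i, poch (c i) (m i)) * ∏ i, poch (c i + m i) k =
        (∏ i, poch (c i) k) * P.eval (k : ℂ) := by
      rw [hP, eval_prod_X_add_C, ← prod_mul_distrib, ← prod_mul_distrib]
      exact prod_congr rfl fun i _ => by rw [← poch_add, ← poch_add, add_comm]
    have hPk : P.eval (k : ℂ) = P.eval (-b) + (k + b) * Q.eval (k : ℂ) := by
      conv_lhs => rw [Polynomial.eq_C_add_mul_div_X_add_C P b]
      simp [Q]
    have hbr : P.eval (-b) * (risingCoeff a k / (k + b)) + risingCoeff a k * Q.eval (k : ℂ) =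
        risingCoeff a k * P.eval (k : ℂ) / (k + b) := by
      rw [hPk]
      field_simp
    have hbk' : poch b k = b * poch (b + 1) k / (k + b) := by
      rw [eq_div_iff hkb, add_comm, hbk]
    have hcc' : ∏ i, poch (c i + m i) k =
        (∏ i, poch (c i) k) * P.eval (k : ℂ) / ∏ i, poch (c i) (m i) := by
      rw [eq_div_iff hcm, mul_comm, hcc]
    rw [hbr, risingCoeff, hbk', hcc']
    field_simp
  have hfin := ((hS.mul_left (P.eval (-b))).add hQ).mul_left (b / ∏ i, poch (c i) (m i))
  rw [tsum_congr hterm, hfin.tsum_eq, hP, eval_prod_X_add_C, Complex.Gamma_add_one b hb0,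
    prod_div_distrib]
  simp only [← sub_eq_add_neg]
  ring
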